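/- Let p be an odd prime, let q ∈ ℚ_p satisfy |q - 1|_p < 1 with q ≠ 1, let m be a nonnegative integer, and let n be an odd positive integer. Then q^n · lim_{N→∞} (1/[p^N]_{-q}) Σ_{x=0}^{p^N - 1} [x+n]_q^m (-q)^x + lim_{N→∞} (1/[p^N]_{-q}) Σ_{x=0}^{p^N - 1} [x]_q^m (-q)^x = (1+q) · Σ_{l=0}^{n-1} (-1)^l q^l [l]_q^m, both limits existing in ℚ_p. -/

import Mathlib

/-!
The sums `Σ_{x<p^N} [x+k]_q^m (-q)^x` are combinations of geometric sums: by the binomial theorem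
`[x+k]_q^m` is a combination of the powers `(q^j)^x`, and
`Σ_{x<M} (-q^(j+1))^x = (1 + (q^M)^(j+1)) / (1 + q^(j+1))` for odd `M`. Since `q ≡ 1 mod p`,
`q^(p^N) → 1` (`tendsto_pow_prime_pow`), while `1 + q^j ≠ 0` because `p` is odd
(`one_add_pow_ne_zero`); hence both limits exist (`exists_tendsto_sum`).

For the identity put `g y = [y]_q^m (-q)^y`. Shifting the index (`shift_sum`) gives
`(-q)^n Σ_{x<M} [x+n]_q^m (-q)^x - Σ_{x<M} g x = Σ_{i<n} (g (M+i) - g i)`. For `M = p^N`, odd,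
`g (M+i) → -g i`, and the prefactor `1/[p^N]_{-q}` tends to `(1+q)/2`, so the right side
multiplied by the prefactor tends to `-(1+q) Σ_{i<n} g i`, while `(-q)^n = -q^n` as `n` is odd.
-/

open Filter

section Aux

variable {p : ℕ} [Fact p.Prime] {q : ℚ_[p]}

lemma exists_padicInt_lift (hq1 : ‖q - 1‖ < 1) :
    ∃ z : ℤ_[p], (z : ℚ_[p]) = q ∧ (p : ℤ_[p]) ∣ z - 1 := by
  obtain ⟨w, hw⟩ : ∃ w : ℤ_[p], (w : ℚ_[p]) = q - 1 := ⟨⟨q - 1, hq1.le⟩, rfl⟩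
  refine ⟨1 + w, by push_cast; rw [hw]; ring, ?_⟩
  rw [add_sub_cancel_left, ← PadicInt.norm_lt_one_iff_dvd, PadicInt.norm_def, hw]
  exact hq1

lemma tendsto_pow_prime_pow (hq1 : ‖q - 1‖ < 1) :
    Tendsto (fun N : ℕ => q ^ (p ^ N)) atTop (nhds 1) := by
  obtain ⟨z, rfl, hz⟩ := exists_padicInt_lift hq1
  rw [tendsto_iff_norm_sub_tendsto_zero]
  have hp1 : (1 : ℝ) < p := by exact_mod_cast (Fact.out : p.Prime).one_lt
  have hlim : Tendsto (fun N : ℕ => ((p : ℝ)⁻¹) ^ N) atTop (nhds 0) :=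
    tendsto_pow_atTop_nhds_zero_of_lt_one (by positivity) (inv_lt_one_of_one_lt₀ hp1)
  refine squeeze_zero (fun _ => norm_nonneg _) (fun N => ?_) hlim
  have h := dvd_sub_pow_of_dvd_sub hz N
  rw [one_pow] at h
  have h2 : ((p : ℤ_[p]) ^ N) ∣ z ^ p ^ N - 1 := (pow_dvd_pow _ N.le_succ).trans h
  have h3 := (PadicInt.norm_le_pow_iff_mem_span_pow _ N).2 (Ideal.mem_span_singleton.2 h2)
  rw [PadicInt.norm_def] at h3
  push_cast at h3
  simpa [zpow_neg, inv_pow] using h3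

lemma one_add_pow_ne_zero (hodd : Odd p) (hq1 : ‖q - 1‖ < 1) (k : ℕ) : 1 + q ^ k ≠ 0 := by
  obtain ⟨z, rfl, hz⟩ := exists_padicInt_lift hq1
  intro h
  have h0 : 1 + z ^ k = 0 := PadicInt.ext (by push_cast; exact h)
  have hd : (p : ℤ_[p]) ∣ z ^ k - 1 := hz.trans (sub_one_dvd_pow_sub_one z k)
  -- `z ^ k = -1` would make `p` divide `2`.
  have h2 : (p : ℤ_[p]) ∣ ((2 : ℤ) : ℤ_[p]) := by
    have : ((2 : ℤ) : ℤ_[p]) = -(z ^ k - 1) := by push_cast; linear_combination h0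
    rw [this]; exact (dvd_neg).2 hd
  rw [← PadicInt.norm_lt_one_iff_dvd, PadicInt.norm_int_lt_one_iff_dvd] at h2
  have h3 : p ∣ 2 := by exact_mod_cast h2
  have h4 := (Nat.prime_dvd_prime_iff_eq Fact.out Nat.prime_two).1 h3
  subst h4
  exact absurd hodd (by decide)

lemma tendsto_prefactor (hodd : Odd p) (hq1 : ‖q - 1‖ < 1) :
    Tendsto (fun N : ℕ => 1 / ((1 - (-q) ^ (p ^ N)) / (1 + q))) atTop (nhds ((1 + q) / 2)) := by
  have h : Tendsto (fun N : ℕ => (1 + q) / (1 + q ^ (p ^ N))) atTop (nhds ((1 + q) / (1 + 1))) :=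
    tendsto_const_nhds.div (tendsto_const_nhds.add (tendsto_pow_prime_pow hq1))
      (by norm_num)
  rw [one_add_one_eq_two] at h
  refine h.congr fun N => ?_
  rw [(hodd.pow).neg_pow, sub_neg_eq_add, one_div_div]

lemma geom_sum_closed (hodd : Odd p) (hq1 : ‖q - 1‖ < 1) (j N : ℕ) :
    ∑ x ∈ Finset.range (p ^ N), (q ^ j) ^ x * (-q) ^ x
      = (1 + (q ^ (p ^ N)) ^ (j + 1)) / (1 + q ^ (j + 1)) := by
  have hne := one_add_pow_ne_zero hodd hq1 (j + 1)
  have h := geom_sum_mul (-(q ^ (j + 1))) (p ^ N)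
  rw [(hodd.pow).neg_pow] at h
  have hs : ∑ x ∈ Finset.range (p ^ N), (q ^ j) ^ x * (-q) ^ x
      = ∑ x ∈ Finset.range (p ^ N), (-(q ^ (j + 1))) ^ x := by
    refine Finset.sum_congr rfl fun x _ => ?_
    rw [← mul_pow]; ring
  rw [hs, eq_div_iff hne, ← pow_mul, mul_comm (p ^ N), pow_mul]
  linear_combination -h

lemma exists_tendsto_sum (hodd : Odd p) (hq1 : ‖q - 1‖ < 1) (m k : ℕ) :
    ∃ A : ℚ_[p], Tendsto (fun N : ℕ =>
      ∑ x ∈ Finset.range (p ^ N), ((1 - q ^ (x + k)) / (1 - q)) ^ m * (-q) ^ x)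
      atTop (nhds A) := by
  have hexp : ∀ N : ℕ,
      ∑ x ∈ Finset.range (p ^ N), ((1 - q ^ (x + k)) / (1 - q)) ^ m * (-q) ^ x
      = ∑ j ∈ Finset.range (m + 1), ((-q ^ k) ^ j * (m.choose j : ℚ_[p]) / (1 - q) ^ m) *
          ((1 + (q ^ (p ^ N)) ^ (j + 1)) / (1 + q ^ (j + 1))) := by
    intro N
    simp_rw [← geom_sum_closed hodd hq1, Finset.mul_sum]
    rw [Finset.sum_comm]
    refine Finset.sum_congr rfl fun x _ => ?_
    have hb : (1 - q ^ (x + k)) ^ m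
        = ∑ j ∈ Finset.range (m + 1), (-q ^ (x + k)) ^ j * (m.choose j : ℚ_[p]) := by
      rw [sub_eq_neg_add, add_pow]
      simp
    rw [div_pow, hb, Finset.sum_div, Finset.sum_mul]
    refine Finset.sum_congr rfl fun j _ => ?_
    rw [show (-q ^ (x + k)) ^ j = (-q ^ k) ^ j * (q ^ j) ^ x by
      rw [pow_add, neg_pow, neg_pow (q ^ k)]; ring]
    ring
  simp_rw [hexp]
  exact ⟨_, tendsto_finsetSum _ fun j _ => tendsto_const_nhds.mul
    ((tendsto_const_nhds.add ((tendsto_pow_prime_pow hq1).pow (j + 1))).div_const _)⟩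

end Aux

lemma shift_sum {R : Type*} [CommRing R] (f : ℕ → R) (t : R) (M n : ℕ) :
    t ^ n * ∑ x ∈ Finset.range M, f (x + n) * t ^ x - ∑ x ∈ Finset.range M, f x * t ^ x
      = ∑ i ∈ Finset.range n, (f (M + i) * t ^ (M + i) - f i * t ^ i) := by
  have h1 := Finset.sum_range_add (fun y => f y * t ^ y) n M
  have h2 := Finset.sum_range_add (fun y => f y * t ^ y) M n
  rw [add_comm M n, h1] at h2
  have h3 : t ^ n * ∑ x ∈ Finset.range M, f (x + n) * t ^ x
      = ∑ x ∈ Finset.range M, f (n + x) * t ^ (n + x) := by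
    rw [Finset.mul_sum]
    refine Finset.sum_congr rfl fun x _ => ?_
    rw [add_comm x n, pow_add]; ring
  rw [h3, Finset.sum_sub_distrib]
  linear_combination h2



/-- Let `p` be an odd prime, `q ∈ ℚ_p` with `|q-1|_p < 1`, `q ≠ 1`, `m : ℕ`,
and `n` an odd positive integer. Then both `p`-adic `q`-integral limits exist, and
`q^n · I_{-q}([x+n]_q^m) + I_{-q}([x]_q^m) = (1+q) · Σ_{l=0}^{n-1} (-1)^l q^l [l]_q^m`. -/
theorem stmt_13 (p : ℕ) [Fact p.Prime] (hodd : Odd p)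
    (q : ℚ_[p]) (hq1 : ‖q - 1‖ < 1) (hq : q ≠ 1)
    (m n : ℕ) (hn : 0 < n) (hnodd : Odd n) :
    ∃ A B : ℚ_[p],
      Tendsto (fun N : ℕ =>
          (1 / ((1 - (-q) ^ (p ^ N)) / (1 + q))) *
            ∑ x ∈ Finset.range (p ^ N), ((1 - q ^ (x + n)) / (1 - q)) ^ m * (-q) ^ x)
        atTop (nhds A) ∧
      Tendsto (fun N : ℕ =>
          (1 / ((1 - (-q) ^ (p ^ N)) / (1 + q))) *
            ∑ x ∈ Finset.range (p ^ N), ((1 - q ^ x) / (1 - q)) ^ m * (-q) ^ x)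
        atTop (nhds B) ∧
      q ^ n * A + B =
        (1 + q) * ∑ l ∈ Finset.range n, (-1 : ℚ_[p]) ^ l * q ^ l * ((1 - q ^ l) / (1 - q)) ^ m := by
  obtain ⟨A, hA⟩ := exists_tendsto_sum hodd hq1 m n
  obtain ⟨B, hB⟩ := exists_tendsto_sum hodd hq1 m 0
  simp only [add_zero] at hB
  have hc := tendsto_prefactor hodd hq1
  refine ⟨_, _, hc.mul hA, hc.mul hB, ?_⟩
  have hT := tendsto_pow_prime_pow hq1
  have hterm : ∀ i : ℕ, Tendsto (fun N : ℕ =>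
      ((1 - q ^ (p ^ N + i)) / (1 - q)) ^ m * (-q) ^ (p ^ N + i)) atTop
      (nhds (((1 - 1 * q ^ i) / (1 - q)) ^ m * (-1 * (-q) ^ i))) := by
    intro i
    have hpow : ∀ N : ℕ, (-q) ^ (p ^ N + i) = -q ^ (p ^ N) * (-q) ^ i := fun N => by
      rw [pow_add, (hodd.pow).neg_pow]
    simp_rw [hpow, pow_add]
    exact (((tendsto_const_nhds.sub (hT.mul_const _)).div_const _).pow m).mul
      (hT.neg.mul_const _)
  have hR := tendsto_finsetSum (Finset.range n) fun i _ =>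
    (hterm i).sub_const (((1 - q ^ i) / (1 - q)) ^ m * (-q) ^ i)
  have hL := (hA.const_mul ((-q) ^ n)).sub hB
  have hEq := tendsto_nhds_unique (hL.congr fun N =>
    shift_sum (fun y => ((1 - q ^ y) / (1 - q)) ^ m) (-q) (p ^ N) n) hR
  have hS : ∑ i ∈ Finset.range n, (((1 - 1 * q ^ i) / (1 - q)) ^ m * (-1 * (-q) ^ i)
        - ((1 - q ^ i) / (1 - q)) ^ m * (-q) ^ i)
      = -2 * ∑ l ∈ Finset.range n, (-1 : ℚ_[p]) ^ l * q ^ l * ((1 - q ^ l) / (1 - q)) ^ m := by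
    rw [Finset.mul_sum]
    refine Finset.sum_congr rfl fun i _ => ?_
    rw [one_mul, neg_pow q i]; ring
  rw [hS, hnodd.neg_pow] at hEq
  linear_combination (-(1 + q) / 2) * hEq
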